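/- arXiv:1305.3685 — 3 statements merged into one kernel-verified Lean document; each statement's English description precedes it below -/
import Mathlib

section
/- Let N ≥ 3 be an integer, m0 > 0, and F : ℝ → ℝ. Suppose E ∈ ℝ is a lower bound for L_{m0} on the Pohozaev sphere, i.e. L_{m0}(v) ≥ E for every admissible v with ∫_{ℝ^N}|∇v|² dx > 0 and N∫_{ℝ^N}(F(v) − (m0/2)v²) dx = ((N−2)/2)∫_{ℝ^N}|∇v|² dx. Then every admissible u with ∫_{ℝ^N}|∇u|² dx > 0 and P₀(u) ∈ (0, √(N/(N−2))) satisfies L_{m0}(u) ≥ g(P₀(u))·E. (Lemma 2.1 of the paper, with E playing the role of the least energy level E(m0) via its variational characterization.) -/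
open MeasureTheory Real

noncomputable section

/-- `u : ℝ^N → ℝ` is admissible: differentiable with `|∇u|²`, `u²` and `F(u)` integrable. -/
def Admissible {N : ℕ} (F : ℝ → ℝ) (u : EuclideanSpace ℝ (Fin N) → ℝ) : Prop :=
  Differentiable ℝ u ∧
  Integrable (fun x => ‖gradient u x‖ ^ 2) ∧
  Integrable (fun x => (u x) ^ 2) ∧
  Integrable (fun x => F (u x))

/-- The limit functional `L_{m0}`. -/
def Lfun {N : ℕ} (m0 : ℝ) (F : ℝ → ℝ) (u : EuclideanSpace ℝ (Fin N) → ℝ) : ℝ :=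
  (1 / 2) * (∫ x, ‖gradient u x‖ ^ 2) + (m0 / 2) * (∫ x, (u x) ^ 2) -
    ∫ x, F (u x)

/-- The Pohozaev-type function `P₀`. -/
def P0 (N : ℕ) (m0 : ℝ) (F : ℝ → ℝ) (u : EuclideanSpace ℝ (Fin N) → ℝ) : ℝ :=
  Real.sqrt (((N : ℝ) * ∫ x, (F (u x) - (m0 / 2) * (u x) ^ 2)) /
    ((((N : ℝ) - 2) / 2) * ∫ x, ‖gradient u x‖ ^ 2))

/-- The comparison function `g(t) = (1/2)(N t^{N-2} - (N-2) t^N)`. -/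
def gfun (N : ℕ) (t : ℝ) : ℝ :=
  (1 / 2) * ((N : ℝ) * t ^ (N - 2) - ((N : ℝ) - 2) * t ^ N)

theorem gradient_comp_smul_aux {N : ℕ} (u : EuclideanSpace ℝ (Fin N) → ℝ)
    (hu : Differentiable ℝ u) (t : ℝ) (x : EuclideanSpace ℝ (Fin N)) :
    gradient (fun y => u (t • y)) x = t • gradient u (t • x) := by
  have h : HasFDerivAt (fun y => u (t • y)) (t • fderiv ℝ u (t • x)) x := by
    have h1 := (hu (t • x)).hasFDerivAt.comp x ((hasFDerivAt_id x).const_smul t)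
    have h2 : (fderiv ℝ u (t • x)).comp (t • ContinuousLinearMap.id ℝ (EuclideanSpace ℝ (Fin N)))
        = t • fderiv ℝ u (t • x) := by
      ext y
      simp
    rw [← h2]
    exact h1
  unfold gradient
  rw [h.fderiv]
  simp

theorem integral_smul_aux {N : ℕ} (f : EuclideanSpace ℝ (Fin N) → ℝ) (t : ℝ) (ht : 0 < t) :
    ∫ x, f (t • x) = (t ^ N)⁻¹ * ∫ x, f x := by
  rw [Measure.integral_comp_smul]
  simp [abs_of_pos ht]

/-- Lemma 2.1: if `E` is a lower bound for `L_{m0}` on the Pohozaev sphere `P₀ = 1`, then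
`L_{m0}(u) ≥ g(P₀(u))·E` whenever `P₀(u) ∈ (0, √(N/(N-2)))`. -/
theorem lower_bound_via_P0 (N : ℕ) (hN : 3 ≤ N) (m0 : ℝ) (hm0 : 0 < m0) (F : ℝ → ℝ) (E : ℝ)
    (hE : ∀ v : EuclideanSpace ℝ (Fin N) → ℝ, Admissible F v →
      0 < ∫ x, ‖gradient v x‖ ^ 2 →
      (N : ℝ) * (∫ x, (F (v x) - (m0 / 2) * (v x) ^ 2)) =
        (((N : ℝ) - 2) / 2) * ∫ x, ‖gradient v x‖ ^ 2 →
      E ≤ Lfun m0 F v) :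
    ∀ u : EuclideanSpace ℝ (Fin N) → ℝ, Admissible F u →
      0 < ∫ x, ‖gradient u x‖ ^ 2 →
      P0 N m0 F u ∈ Set.Ioo 0 (Real.sqrt ((N : ℝ) / ((N : ℝ) - 2))) →
      gfun N (P0 N m0 F u) * E ≤ Lfun m0 F u := by
  intro u hu hA hP
  obtain ⟨hd, hi1, hi2, hi3⟩ := hu
  obtain ⟨ht, ht2⟩ := hP
  have hN3 : (3 : ℝ) ≤ N := by exact_mod_cast hN
  have hsq : (P0 N m0 F u) ^ 2 = ((N : ℝ) * ∫ x, (F (u x) - (m0 / 2) * (u x) ^ 2)) /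
    ((((N : ℝ) - 2) / 2) * ∫ x, ‖gradient u x‖ ^ 2) := by
    have h0 := Real.sqrt_pos.1 ht
    exact Real.sq_sqrt h0.le
  have hlt : (P0 N m0 F u) ^ 2 < (N : ℝ) / ((N : ℝ) - 2) := by
    have h0 : (0 : ℝ) ≤ (N : ℝ) / ((N : ℝ) - 2) := div_nonneg (by linarith) (by linarith)
    rw [← Real.sq_sqrt h0]
    exact pow_lt_pow_left₀ ht2 ht.le (by norm_num)
  have hL : ∀ v : EuclideanSpace ℝ (Fin N) → ℝ, Admissible F v → Lfun m0 F v =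
      (1 / 2) * (∫ x, ‖gradient v x‖ ^ 2) - ∫ x, (F (v x) - (m0 / 2) * (v x) ^ 2) := by
    intro v hv
    obtain ⟨-, -, h2, h3⟩ := hv
    unfold Lfun
    rw [integral_sub h3 (h2.const_mul _), integral_const_mul]
    ring
  rw [hL u ⟨hd, hi1, hi2, hi3⟩]
  unfold gfun
  generalize P0 N m0 F u = t at *
  have hg : (fun x => ‖gradient (fun y => u (t • y)) x‖ ^ 2) =
      fun x => t ^ 2 * ‖gradient u (t • x)‖ ^ 2 := by
    funext x
    rw [gradient_comp_smul_aux u hd, norm_smul, mul_pow]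
    simp
  have hv : Admissible F (fun y => u (t • y)) := by
    refine ⟨hd.comp (differentiable_id.const_smul t), ?_, ?_, ?_⟩
    · rw [hg]
      exact (hi1.comp_smul ht.ne').const_mul _
    · exact hi2.comp_smul ht.ne'
    · exact hi3.comp_smul ht.ne'
  have hE' := hE _ hv
  rw [hL _ hv, hg, integral_const_mul,
    integral_smul_aux (fun x => ‖gradient u x‖ ^ 2) t ht,
    integral_smul_aux (fun x => F (u x) - (m0 / 2) * (u x) ^ 2) t ht] at hE'
  generalize (∫ x, ‖gradient u x‖ ^ 2) = A at *
  generalize (∫ x, (F (u x) - (m0 / 2) * (u x) ^ 2)) = B at *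
  obtain ⟨n, rfl⟩ : ∃ n, N = n + 2 := ⟨N - 2, by omega⟩
  have hn : (0 : ℝ) < n := by push_cast at hN3; linarith
  simp only [Nat.add_sub_cancel]
  push_cast at *
  have e1 : ((n : ℝ) + 2 - 2) = n := by ring
  rw [e1] at hlt hsq hE' ⊢
  have hB : ((n : ℝ) + 2) * B = n / 2 * A * t ^ 2 := by
    rw [hsq]; field_simp
  rw [lt_div_iff₀ hn] at hlt
  have hq : 0 < t ^ n := pow_pos ht n
  have hE2 := hE' (by positivity) (by
    rw [mul_left_comm, hB]; ring)
  have hB' : B = n / 2 * A * t ^ 2 / (n + 2) := by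
    rw [← hB]; field_simp
  have hE3 : E * t ^ n ≤ A / (n + 2) := by
    have h := mul_le_mul_of_nonneg_right hE2 hq.le
    refine h.trans (le_of_eq ?_)
    rw [hB']
    field_simp
    ring
  have hc : 0 ≤ (1 / 2 : ℝ) * ((n + 2) - n * t ^ 2) := by linarith
  have h := mul_le_mul_of_nonneg_left hE3 hc
  calc _ = (1 / 2 : ℝ) * ((n + 2) - n * t ^ 2) * (E * t ^ n) := by ring
    _ ≤ _ := h
    _ = _ := by
      rw [hB']
      field_simp
end
end

section
/- Let N ≥ 3 be an integer. Let Ŝ be a set of differentiable functions U : ℝ^N → ℝ with U² and |∇U|² integrable, and suppose: (i) there exist C, c > 0 such that |U(x)| + |∇U(x)| ≤ C·exp(−c|x|) for every U ∈ Ŝ and every x ∈ ℝ^N; (ii) there is r_* > 0 with ‖U‖_{H¹} ≥ r_* for every U ∈ Ŝ. For r > 0 let S(r) be the set of functions of the form x ↦ U(x−y) + φ(x) with y ∈ ℝ^N, U ∈ Ŝ, and φ differentiable with φ², |∇φ|² integrable and ‖φ‖_{H¹} < r. Then there exist r₀ > 0, R₀ > 0 and a map Υ : S(r₀) → ℝ^N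 such that: (a) for every representation u = U(·−p) + φ with p ∈ ℝ^N, U ∈ Ŝ and ‖φ‖_{H¹} ≤ r₀ one has |Υ(u) − p| ≤ 2R₀; (b) Υ is shift equivariant: for every u ∈ S(r₀) and y ∈ ℝ^N the shifted function x ↦ u(x−y) lies in S(r₀) and Υ(u(·−y)) = Υ(u) + y; (c) Υ is locally Lipschitz: there exist constants C₁, C₂ > 0 such that |Υ(u) − Υ(v)| ≤ C₁‖u−v‖_{H¹} for all u, v ∈ S(r₀) with ‖u−v‖_{H¹} ≤ C₂. (Lemma 2.2 of the paper: the center of mass on a neighborhood of the set of expected solutions.) -/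
open MeasureTheory Real

noncomputable section

/-- A function `ℝ^N → ℝ` with the regularity/integrability needed to speak of its H¹-norm. -/
def GoodFun {N : ℕ} (w : EuclideanSpace ℝ (Fin N) → ℝ) : Prop :=
  Differentiable ℝ w ∧
  Integrable (fun x => ‖gradient w x‖ ^ 2) ∧
  Integrable (fun x => (w x) ^ 2)

/-- The H¹-norm `‖w‖_{H¹} = (∫ (|∇w|² + w²))^{1/2}`. -/
def H1Norm {N : ℕ} (w : EuclideanSpace ℝ (Fin N) → ℝ) : ℝ :=
  Real.sqrt (∫ x, (‖gradient w x‖ ^ 2 + (w x) ^ 2))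

/-- The neighborhood `S(r)` of the set `Ŝ` of expected profiles. -/
def SS {N : ℕ} (Shat : Set (EuclideanSpace ℝ (Fin N) → ℝ)) (r : ℝ) :
    Set (EuclideanSpace ℝ (Fin N) → ℝ) :=
  { u | ∃ (y : EuclideanSpace ℝ (Fin N)) (U φ : EuclideanSpace ℝ (Fin N) → ℝ),
      U ∈ Shat ∧ GoodFun φ ∧ H1Norm φ < r ∧ u = fun x => U (x - y) + φ x }

open Set Filter Topology Metric in
lemma eLpNorm_two_toReal {α H : Type*} [MeasurableSpace α] [NormedAddCommGroup H] {μ : Measure α}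
    {f : α → H} (hf : MemLp f 2 μ) :
    (eLpNorm f 2 μ).toReal = Real.sqrt (∫ x, ‖f x‖ ^ 2 ∂μ) := by
  rw [MemLp.eLpNorm_eq_integral_rpow_norm two_ne_zero ENNReal.ofNat_ne_top hf,
    ENNReal.toReal_ofReal (by positivity)]
  simp [Real.sqrt_eq_rpow]

/-- The pair (gradient, value). -/
def GG {N : ℕ} (w : EuclideanSpace ℝ (Fin N) → ℝ) :
    EuclideanSpace ℝ (Fin N) → WithLp 2 (EuclideanSpace ℝ (Fin N) × ℝ) :=
  fun x => WithLp.toLp 2 (gradient w x, w x)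

/-- Local L2 norm. -/
def LN {N : ℕ} {H : Type*} [NormedAddCommGroup H] (f : EuclideanSpace ℝ (Fin N) → H)
    (s : Set (EuclideanSpace ℝ (Fin N))) : ℝ :=
  (eLpNorm f 2 (volume.restrict s)).toReal

section
variable {N : ℕ} {H : Type*} [NormedAddCommGroup H]

lemma GG_add {f g : EuclideanSpace ℝ (Fin N) → ℝ} (hf : Differentiable ℝ f)
    (hg : Differentiable ℝ g) : GG (fun x => f x + g x) = GG f + GG g := by
  funext x
  have : gradient (fun x => f x + g x) x = gradient f x + gradient g x := by
    simp only [gradient]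
    rw [fderiv_fun_add (hf x) (hg x), map_add]
  simp only [GG, this, Pi.add_apply]
  rfl

lemma GG_sub {f g : EuclideanSpace ℝ (Fin N) → ℝ} (hf : Differentiable ℝ f)
    (hg : Differentiable ℝ g) : GG (fun x => f x - g x) = GG f - GG g := by
  funext x
  have : gradient (fun x => f x - g x) x = gradient f x - gradient g x := by
    simp only [gradient]
    rw [fderiv_fun_sub (hf x) (hg x), map_sub]
  simp only [GG, this, Pi.sub_apply]
  rfl

lemma gradient_shift (u : EuclideanSpace ℝ (Fin N) → ℝ) (y x : EuclideanSpace ℝ (Fin N)) :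
    gradient (fun x => u (x - y)) x = gradient u (x - y) := by
  simp only [gradient]
  rw [fderiv_comp_sub]

lemma GG_shift (u : EuclideanSpace ℝ (Fin N) → ℝ) (y : EuclideanSpace ℝ (Fin N)) :
    GG (fun x => u (x - y)) = fun x => GG u (x - y) := by
  funext x
  simp only [GG, gradient_shift]

lemma GG_norm_sq (u : EuclideanSpace ℝ (Fin N) → ℝ) (x : EuclideanSpace ℝ (Fin N)) :
    ‖GG u x‖ ^ 2 = ‖gradient u x‖ ^ 2 + (u x) ^ 2 := by
  rw [WithLp.prod_norm_sq_eq_of_L2]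
  simp [GG]

lemma GG_meas {u : EuclideanSpace ℝ (Fin N) → ℝ} (h : Differentiable ℝ u) :
    AEStronglyMeasurable (GG u) volume := by
  have h1 : Measurable (gradient u) := by
    unfold gradient
    exact (InnerProductSpace.toDual ℝ _).symm.continuous.measurable.comp (measurable_fderiv ℝ u)
  have h2 : Measurable u := h.continuous.measurable
  have h3 : Continuous (fun p : EuclideanSpace ℝ (Fin N) × ℝ => WithLp.toLp 2 p) :=
    WithLp.prod_continuous_toLp 2 _ _
  exact h3.comp_aestronglyMeasurable (h1.prodMk h2).aestronglyMeasurable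

lemma GG_memLp {u : EuclideanSpace ℝ (Fin N) → ℝ} (h : GoodFun u) :
    MemLp (GG u) 2 volume := by
  rw [memLp_two_iff_integrable_sq_norm (GG_meas h.1)]
  simp only [GG_norm_sq]
  exact h.2.1.add h.2.2

lemma H1_eq {u : EuclideanSpace ℝ (Fin N) → ℝ} (h : GoodFun u) :
    H1Norm u = LN (GG u) Set.univ := by
  unfold H1Norm LN
  rw [Measure.restrict_univ, eLpNorm_two_toReal (GG_memLp h)]
  simp only [GG_norm_sq]

lemma good_of_memLp {u : EuclideanSpace ℝ (Fin N) → ℝ} (h : Differentiable ℝ u)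
    (hm : MemLp (GG u) 2 volume) : GoodFun u := by
  have h1 := (memLp_two_iff_integrable_sq_norm (GG_meas h)).1 hm
  simp only [GG_norm_sq] at h1
  have hgm : Measurable (gradient u) := by
    unfold gradient
    exact (InnerProductSpace.toDual ℝ _).symm.continuous.measurable.comp (measurable_fderiv ℝ u)
  have hum : Measurable u := h.continuous.measurable
  refine ⟨h, h1.mono (by fun_prop) ?_, h1.mono (by fun_prop) ?_⟩ <;>
  · refine Filter.Eventually.of_forall fun x => ?_
    rw [Real.norm_of_nonneg (by positivity), Real.norm_of_nonneg (by positivity)]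
    nlinarith [sq_nonneg (u x), sq_nonneg ‖gradient u x‖]

lemma good_add {f g : EuclideanSpace ℝ (Fin N) → ℝ} (hf : GoodFun f) (hg : GoodFun g) :
    GoodFun (fun x => f x + g x) := by
  refine good_of_memLp (hf.1.add hg.1) ?_
  rw [GG_add hf.1 hg.1]
  exact (GG_memLp hf).add (GG_memLp hg)

lemma good_sub {f g : EuclideanSpace ℝ (Fin N) → ℝ} (hf : GoodFun f) (hg : GoodFun g) :
    GoodFun (fun x => f x - g x) := by
  refine good_of_memLp (hf.1.sub hg.1) ?_
  rw [GG_sub hf.1 hg.1]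
  exact (GG_memLp hf).sub (GG_memLp hg)

lemma good_shift {f : EuclideanSpace ℝ (Fin N) → ℝ} (hf : GoodFun f)
    (y : EuclideanSpace ℝ (Fin N)) : GoodFun (fun x => f (x - y)) := by
  refine ⟨hf.1.comp (differentiable_id.sub_const y), ?_, ?_⟩
  · simp only [gradient_shift]
    exact hf.2.1.comp_sub_right y
  · exact hf.2.2.comp_sub_right y

lemma H1_shift (f : EuclideanSpace ℝ (Fin N) → ℝ)
    (y : EuclideanSpace ℝ (Fin N)) : H1Norm (fun x => f (x - y)) = H1Norm f := by
  unfold H1Norm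
  simp only [gradient_shift]
  rw [integral_sub_right_eq_self (fun x => ‖gradient f x‖ ^ 2 + (f x) ^ 2) y]

lemma LN_nonneg (f : EuclideanSpace ℝ (Fin N) → H) (s : Set (EuclideanSpace ℝ (Fin N))) :
    0 ≤ LN f s := ENNReal.toReal_nonneg

lemma LN_add {f g : EuclideanSpace ℝ (Fin N) → H} (hf : MemLp f 2 volume) (hg : MemLp g 2 volume)
    (s : Set (EuclideanSpace ℝ (Fin N))) : LN (f + g) s ≤ LN f s + LN g s := by
  unfold LN
  have h1 := hf.restrict s
  have h2 := hg.restrict s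
  rw [← ENNReal.toReal_add h1.2.ne h2.2.ne]
  exact ENNReal.toReal_mono (ENNReal.add_ne_top.2 ⟨h1.2.ne, h2.2.ne⟩)
    (eLpNorm_add_le h1.1 h2.1 (by norm_num))

lemma LN_sub {f g : EuclideanSpace ℝ (Fin N) → H} (hf : MemLp f 2 volume) (hg : MemLp g 2 volume)
    (s : Set (EuclideanSpace ℝ (Fin N))) : LN f s ≤ LN (f + g) s + LN g s := by
  have h := LN_add (f := f + g) (g := -g) (hf.add hg) hg.neg s
  have h2 : LN (-g) s = LN g s := by unfold LN; rw [eLpNorm_neg]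
  rw [h2] at h
  simpa using h

lemma LN_mono {f : EuclideanSpace ℝ (Fin N) → H} (hf : MemLp f 2 volume)
    {s t : Set (EuclideanSpace ℝ (Fin N))} (hst : s ⊆ t) : LN f s ≤ LN f t :=
  ENNReal.toReal_mono (hf.restrict t).2.ne
    (eLpNorm_mono_measure f (Measure.restrict_mono hst le_rfl))

lemma LN_union {f : EuclideanSpace ℝ (Fin N) → H} (hf : MemLp f 2 volume)
    {s : Set (EuclideanSpace ℝ (Fin N))} (hs : MeasurableSet s) :
    LN f Set.univ ≤ LN f s + LN f sᶜ := by
  have hi1 : MemLp (s.indicator f) 2 volume := MemLp.indicator hs hf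
  have hi2 : MemLp (sᶜ.indicator f) 2 volume := MemLp.indicator hs.compl hf
  have h := LN_add hi1 hi2 Set.univ
  rw [Set.indicator_self_add_compl] at h
  refine h.trans (le_of_eq ?_)
  unfold LN
  rw [Measure.restrict_univ, eLpNorm_indicator_eq_eLpNorm_restrict hs,
    eLpNorm_indicator_eq_eLpNorm_restrict hs.compl]

lemma LN_shift {f : EuclideanSpace ℝ (Fin N) → H} (hf : MemLp f 2 volume)
    {s : Set (EuclideanSpace ℝ (Fin N))} (hs : MeasurableSet s) (y : EuclideanSpace ℝ (Fin N)) :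
    LN (fun x => f (x - y)) ((fun x => x - y) ⁻¹' s) = LN f s := by
  unfold LN
  congr 1
  have hmp := (measurePreserving_sub_right (volume : Measure (EuclideanSpace ℝ (Fin N)))
    y).restrict_preimage hs
  have := eLpNorm_comp_measurePreserving (p := 2) (hf.restrict s).1 hmp
  exact this

lemma LN_shift_ball {f : EuclideanSpace ℝ (Fin N) → H} (hf : MemLp f 2 volume)
    (q y : EuclideanSpace ℝ (Fin N)) (R : ℝ) :
    LN (fun x => f (x - y)) (Metric.ball q R) = LN f (Metric.ball (q - y) R) := by
  rw [← LN_shift hf measurableSet_ball y]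
  congr 1
  ext x
  simp [dist_eq_norm]

open Set Filter Topology Metric in
lemma integrable_exp_norm (c : ℝ) (hc : 0 < c) :
    Integrable (fun x : EuclideanSpace ℝ (Fin N) => Real.exp (-c * ‖x‖)) := by
  have h := integrable_one_add_norm (E := EuclideanSpace ℝ (Fin N)) (μ := volume)
    (r := ((N + 1 : ℕ) : ℝ)) (by simp)
  refine (h.const_mul (Real.exp c * (N + 1).factorial / c ^ (N + 1))).mono'
    (by fun_prop) (Eventually.of_forall fun x => ?_)
  rw [Real.norm_of_nonneg (by positivity), Real.rpow_neg (by positivity), Real.rpow_natCast]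
  have h1 := Real.pow_div_factorial_le_exp (x := c * (1 + ‖x‖)) (by positivity) (N + 1)
  have h2 : Real.exp (-c * ‖x‖) = Real.exp c * (Real.exp (c * (1 + ‖x‖)))⁻¹ := by
    rw [← Real.exp_neg, ← Real.exp_add]; congr 1; ring
  rw [h2, mul_div_assoc, mul_assoc]
  refine mul_le_mul_of_nonneg_left ?_ (by positivity)
  have h3 : (Real.exp (c * (1 + ‖x‖)))⁻¹ ≤ ((c * (1 + ‖x‖)) ^ (N + 1) / (N + 1).factorial)⁻¹ :=
    inv_anti₀ (by positivity) h1
  refine h3.trans (le_of_eq ?_)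
  rw [mul_pow]
  field_simp

open Set Filter Topology Metric in
lemma tail_small (C c : ℝ) (hC : 0 < C) (hc : 0 < c) (ε : ℝ) (hε : 0 < ε) :
    ∃ R > 0, ∀ U : EuclideanSpace ℝ (Fin N) → ℝ, GoodFun U →
      (∀ x, |U x| + ‖gradient U x‖ ≤ C * Real.exp (-c * ‖x‖)) →
      LN (GG U) (ball 0 R)ᶜ ≤ ε := by
  set g : EuclideanSpace ℝ (Fin N) → ℝ := fun x => C ^ 2 * Real.exp (-(2 * c) * ‖x‖) with hg
  have hgi : Integrable g := (integrable_exp_norm (2 * c) (by positivity)).const_mul _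
  have ht := tendsto_setIntegral_of_antitone (μ := volume) (f := g)
    (s := fun n : ℕ => (ball (0 : EuclideanSpace ℝ (Fin N)) n)ᶜ)
    (fun n => measurableSet_ball.compl)
    (fun a b hab => compl_subset_compl.2 (ball_subset_ball (by exact_mod_cast hab)))
    ⟨0, hgi.integrableOn⟩
  have h0 : (⋂ n : ℕ, (ball (0 : EuclideanSpace ℝ (Fin N)) n)ᶜ) = ∅ := by
    rw [← compl_iUnion, iUnion_ball_nat, compl_univ]
  rw [h0, setIntegral_empty] at ht
  obtain ⟨n, hn, hn1⟩ := ((ht.eventually (gt_mem_nhds (pow_pos hε 2))).and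
    (eventually_ge_atTop 1)).exists
  refine ⟨n, by exact_mod_cast hn1, fun U hU hdec => ?_⟩
  unfold LN
  rw [eLpNorm_two_toReal ((GG_memLp hU).restrict _)]
  rw [Real.sqrt_le_left hε.le]
  refine le_trans ?_ hn.le
  refine setIntegral_mono_on ?_ hgi.integrableOn measurableSet_ball.compl ?_
  · exact ((memLp_two_iff_integrable_sq_norm (GG_meas hU.1)).1 (GG_memLp hU)).integrableOn
  · intro x _
    rw [GG_norm_sq]
    have h1 := hdec x
    have h2 : g x = (C * Real.exp (-c * ‖x‖)) ^ 2 := by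
      rw [mul_pow, ← Real.exp_nat_mul, hg]; push_cast; ring_nf
    rw [h2, ← sq_abs (U x)]
    nlinarith [abs_nonneg (U x), norm_nonneg (gradient U x), mul_nonneg (abs_nonneg (U x)) (norm_nonneg (gradient U x))]

end

section
variable {N : ℕ}

/-- Values whose supremum is the i-th coordinate of the center of mass. -/
def VS (θ : ℝ) (m : EuclideanSpace ℝ (Fin N) → ℝ) (i : Fin N) : Set ℝ :=
  {t | ∃ q, θ < m q ∧ t = q i - 1 / (m q - θ)}

lemma coord_le (x : EuclideanSpace ℝ (Fin N)) (i : Fin N) : |x i| ≤ ‖x‖ := by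
  simpa using PiLp.norm_apply_le x i

lemma norm_le_coord (x : EuclideanSpace ℝ (Fin N)) (A : ℝ) (hA : 0 ≤ A) (h : ∀ i, |x i| ≤ A) :
    ‖x‖ ≤ N * A := by
  rw [EuclideanSpace.norm_eq, Real.sqrt_le_left (by positivity)]
  calc ∑ i, ‖x i‖ ^ 2 ≤ ∑ _i : Fin N, A ^ 2 := by
        refine Finset.sum_le_sum fun i _ => ?_
        rw [Real.norm_eq_abs]
        exact pow_le_pow_left₀ (abs_nonneg _) (h i) 2
    _ = N * A ^ 2 := by simp
    _ ≤ (N * A) ^ 2 := by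
        rw [mul_pow]
        refine mul_le_mul_of_nonneg_right ?_ (sq_nonneg A)
        exact_mod_cast Nat.le_self_pow (by norm_num) N

/-- Localized peak structure. -/
def Pk (θ δ B : ℝ) (m : EuclideanSpace ℝ (Fin N) → ℝ) (p : EuclideanSpace ℝ (Fin N)) : Prop :=
  θ + δ ≤ m p ∧ ∀ q, θ < m q → ‖q - p‖ ≤ B

lemma VS_ub {θ δ B : ℝ} {m : EuclideanSpace ℝ (Fin N) → ℝ} {p : EuclideanSpace ℝ (Fin N)}
    (h : Pk θ δ B m p) (i : Fin N) {t : ℝ} (ht : t ∈ VS θ m i) : t ≤ p i + B := by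
  obtain ⟨q, hq, rfl⟩ := ht
  have h1 := (coord_le (q - p) i).trans (h.2 q hq)
  have h2 : 0 < 1 / (m q - θ) := one_div_pos.2 (sub_pos.2 hq)
  have h3 := (abs_le.1 h1).2
  simp only [PiLp.sub_apply] at h3
  linarith

lemma VS_bdd {θ δ B : ℝ} {m : EuclideanSpace ℝ (Fin N) → ℝ} {p : EuclideanSpace ℝ (Fin N)}
    (h : Pk θ δ B m p) (i : Fin N) : BddAbove (VS θ m i) := ⟨_, fun _ ht => VS_ub h i ht⟩

lemma VS_ne {θ δ B : ℝ} (hδ : 0 < δ) {m : EuclideanSpace ℝ (Fin N) → ℝ}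
    {p : EuclideanSpace ℝ (Fin N)}
    (h : Pk θ δ B m p) (i : Fin N) : (VS θ m i).Nonempty :=
  ⟨_, p, by linarith [h.1], rfl⟩

lemma VS_lb {θ δ : ℝ} (hδ : 0 < δ) {m : EuclideanSpace ℝ (Fin N) → ℝ}
    {p : EuclideanSpace ℝ (Fin N)} (h : θ + δ ≤ m p) (i : Fin N) (hb : BddAbove (VS θ m i)) :
    p i - 1 / δ ≤ sSup (VS θ m i) := by
  have h1 : 1 / (m p - θ) ≤ 1 / δ := one_div_le_one_div_of_le hδ (by linarith)
  have h2 := le_csSup hb (⟨p, by linarith, rfl⟩ : p i - 1 / (m p - θ) ∈ VS θ m i)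
  linarith

lemma VS_near {θ δ B : ℝ} (hδ : 0 < δ) (hB : 0 ≤ B) {m : EuclideanSpace ℝ (Fin N) → ℝ}
    {p : EuclideanSpace ℝ (Fin N)} (h : Pk θ δ B m p) (i : Fin N) :
    |sSup (VS θ m i) - p i| ≤ B + 1 / δ := by
  have h1 := VS_lb hδ h.1 i (VS_bdd h i)
  have h2 := csSup_le (VS_ne hδ h i) (fun _ ht => VS_ub h i ht)
  have h3 : 0 < 1 / δ := one_div_pos.2 hδ
  rw [abs_le]; constructor <;> linarith

lemma VS_lip {θ δ B η ε : ℝ} (hδ : 0 < δ) (hB : 0 ≤ B) (hη : η = 1 / (B + 2 / δ))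
    {m m' : EuclideanSpace ℝ (Fin N) → ℝ}
    {p p' : EuclideanSpace ℝ (Fin N)} (h : Pk θ δ B m p) (h' : Pk θ δ B m' p')
    (hε : ε ≤ η / 2) (hmm : ∀ q, m q ≤ m' q + ε) (hε0 : 0 ≤ ε) (i : Fin N) :
    sSup (VS θ m i) ≤ sSup (VS θ m' i) + 2 / η ^ 2 * ε := by
  have hη0 : 0 < η := by rw [hη]; positivity
  have hηi : 1 / η = B + 2 / δ := by rw [hη]; simp
  have hηδ : η ≤ δ / 2 := by
    rw [hη, div_le_iff₀ (by positivity)]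
    have : δ / 2 * (B + 2 / δ) = δ * B / 2 + 1 := by field_simp
    rw [this]; nlinarith [mul_nonneg hδ.le hB]
  have hlip0 : 0 ≤ 2 / η ^ 2 * ε := by positivity
  refine csSup_le (VS_ne hδ h i) fun t ht => ?_
  have hub := ht
  obtain ⟨q, hq, rfl⟩ := ht
  rcases le_or_gt η (m q - θ) with ha | ha
  · have hm := hmm q
    have ha' : (m q - θ) - ε ≤ m' q - θ := by linarith
    have hpos : 0 < (m q - θ) - ε := by linarith
    have h1 := le_csSup (VS_bdd h' i)
      (⟨q, by linarith, rfl⟩ : q i - 1 / (m' q - θ) ∈ VS θ m' i)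
    have h2 : 1 / (m' q - θ) ≤ 1 / ((m q - θ) - ε) := one_div_le_one_div_of_le hpos ha'
    set a := m q - θ
    have h3 : 1 / (a - ε) - 1 / a ≤ 2 / η ^ 2 * ε := by
      have ha0 : 0 < a := by linarith
      have : 1 / (a - ε) - 1 / a = ε / ((a - ε) * a) := by
        field_simp; ring
      rw [this, div_le_iff₀ (by positivity)]
      have h4 : η ^ 2 / 2 ≤ (a - ε) * a := by
        have : η / 2 * η ≤ (a - ε) * a := by
          apply mul_le_mul <;> linarith
        nlinarith
      calc ε = 2 / η ^ 2 * ε * (η ^ 2 / 2) := by field_simp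
        _ ≤ _ := mul_le_mul_of_nonneg_left h4 hlip0
    linarith
  · have h1 := VS_lb (m := m') (p := p) (θ := θ) (half_pos hδ)
      (by linarith [h.1, hmm p]) i (VS_bdd h' i)
    have h2 : 1 / η ≤ 1 / (m q - θ) := one_div_le_one_div_of_le (by linarith) ha.le
    have h3 := (coord_le (q - p) i).trans (h.2 q hq)
    have h4 := (abs_le.1 h3).2
    simp only [PiLp.sub_apply] at h4
    have h5 : 1 / (δ / 2) = 2 / δ := by field_simp
    rw [h5] at h1
    linarith

lemma VS_shift {θ δ B : ℝ} (hδ : 0 < δ)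
    {m : EuclideanSpace ℝ (Fin N) → ℝ} {p : EuclideanSpace ℝ (Fin N)} (h : Pk θ δ B m p)
    (y : EuclideanSpace ℝ (Fin N)) (i : Fin N) :
    sSup (VS θ (fun q => m (q - y)) i) = sSup (VS θ m i) + y i := by
  have hs : VS θ (fun q => m (q - y)) i = (OrderIso.addRight (y i)) '' VS θ m i := by
    ext t
    constructor
    · rintro ⟨q, hq, rfl⟩
      refine ⟨_, ⟨q - y, hq, rfl⟩, ?_⟩
      simp only [OrderIso.addRight_apply, PiLp.sub_apply]
      ring
    · rintro ⟨_, ⟨q, hq, rfl⟩, rfl⟩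
      refine ⟨q + y, by simpa using hq, ?_⟩
      simp only [OrderIso.addRight_apply, PiLp.add_apply, add_sub_cancel_right]
      ring
  rw [hs, ← OrderIso.map_csSup' _ (VS_ne hδ h i) (VS_bdd h i)]
  rfl

/-- Every representation yields a peak. -/
lemma peak_of_rep {R r : ℝ} (hr : 0 < r) {U φ : EuclideanSpace ℝ (Fin N) → ℝ}
    (hU : GoodFun U) (hφ : GoodFun φ) (hl : r ≤ H1Norm U)
    (htail : LN (GG U) (Metric.ball 0 R)ᶜ ≤ r / 8) (hφr : H1Norm φ ≤ r / 8)
    (p : EuclideanSpace ℝ (Fin N)) :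
    Pk (r / 2) (r / 4) (2 * R)
      (fun q => LN (GG (fun x => U (x - p) + φ x)) (Metric.ball q R)) p := by
  have hUs := good_shift hU p
  have hUm := GG_memLp hUs
  have hφm := GG_memLp hφ
  rw [GG_add hUs.1 hφ.1]
  rw [H1_eq hφ] at hφr
  rw [H1_eq hU] at hl
  have hφs : ∀ s, LN (GG φ) s ≤ r / 8 := fun s => (LN_mono hφm (Set.subset_univ s)).trans hφr
  constructor
  · have h1 := LN_union (GG_memLp hU) (measurableSet_ball (x := 0) (ε := R))
    have h2 := LN_shift_ball (GG_memLp hU) p p R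
    rw [sub_self, ← GG_shift] at h2
    have h3 := LN_sub hUm hφm (Metric.ball p R)
    have h4 := hφs (Metric.ball p R)
    linarith
  · intro q hq
    by_contra hcon
    push Not at hcon
    have h2 := LN_shift_ball (GG_memLp hU) q p R
    rw [← GG_shift] at h2
    have h3 := LN_add hUm hφm (Metric.ball q R)
    have h4 := hφs (Metric.ball q R)
    have h5 : Metric.ball (q - p) R ⊆ (Metric.ball 0 R)ᶜ := by
      intro x hx hx0
      simp only [Metric.mem_ball, dist_eq_norm, sub_zero] at hx hx0
      have := norm_sub_le x (x - (q - p))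
      rw [sub_sub_cancel] at this
      linarith
    have h6 := LN_mono (GG_memLp hU) h5
    simp only at hq
    linarith

end

/-- Lemma 2.2: existence of a shift-equivariant, locally Lipschitz center of mass
`Υ : S(r₀) → ℝ^N` with `|Υ(u) - p| ≤ 2R₀` for every representation `u = U(·-p) + φ`. -/
theorem center_of_mass (N : ℕ) (hN : 3 ≤ N)
    (Shat : Set (EuclideanSpace ℝ (Fin N) → ℝ))
    (hShat : ∀ U ∈ Shat, GoodFun U)
    (C c : ℝ) (hC : 0 < C) (hc : 0 < c)
    (hdecay : ∀ U ∈ Shat, ∀ x : EuclideanSpace ℝ (Fin N),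
      |U x| + ‖gradient U x‖ ≤ C * Real.exp (-c * ‖x‖))
    (rstar : ℝ) (hrstar : 0 < rstar)
    (hlow : ∀ U ∈ Shat, rstar ≤ H1Norm U) :
    ∃ r₀ > 0, ∃ R₀ > 0, ∃ Υ : (EuclideanSpace ℝ (Fin N) → ℝ) → EuclideanSpace ℝ (Fin N),
      -- (a) closeness to the translation point of any admissible representation
      (∀ (u U φ : EuclideanSpace ℝ (Fin N) → ℝ) (p : EuclideanSpace ℝ (Fin N)),
        U ∈ Shat → GoodFun φ → H1Norm φ ≤ r₀ → u = (fun x => U (x - p) + φ x) →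
        ‖Υ u - p‖ ≤ 2 * R₀) ∧
      -- (b) shift equivariance
      (∀ u ∈ SS Shat r₀, ∀ y : EuclideanSpace ℝ (Fin N),
        (fun x => u (x - y)) ∈ SS Shat r₀ ∧
        Υ (fun x => u (x - y)) = Υ u + y) ∧
      -- (c) local Lipschitz continuity
      (∃ C₁ > 0, ∃ C₂ > 0, ∀ u ∈ SS Shat r₀, ∀ v ∈ SS Shat r₀,
        H1Norm (fun x => u x - v x) ≤ C₂ →
        ‖Υ u - Υ v‖ ≤ C₁ * H1Norm (fun x => u x - v x)) := by
  obtain ⟨R, hR, htail⟩ := tail_small (N := N) C c hC hc (rstar / 8) (by positivity)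
  have hN0 : (0 : ℝ) < N := by exact_mod_cast (by omega : 0 < N)
  have hδ : 0 < rstar / 4 := by positivity
  have hB : 0 ≤ 2 * R := by positivity
  set Υ : (EuclideanSpace ℝ (Fin N) → ℝ) → EuclideanSpace ℝ (Fin N) := fun u =>
    WithLp.toLp 2 (fun i => sSup (VS (rstar / 2) (fun q => LN (GG u) (Metric.ball q R)) i)) with hΥ
  have hΥi : ∀ u i, Υ u i = sSup (VS (rstar / 2) (fun q => LN (GG u) (Metric.ball q R)) i) :=
    fun u i => rfl
  have hpk : ∀ u ∈ SS Shat (rstar / 8), GoodFun u ∧ ∃ p, Pk (rstar / 2) (rstar / 4) (2 * R)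
      (fun q => LN (GG u) (Metric.ball q R)) p := by
    rintro u ⟨p, U, φ, hU, hφ, hφr, rfl⟩
    exact ⟨good_add (good_shift (hShat U hU) p) hφ, p, peak_of_rep hrstar (hShat U hU) hφ
      (hlow U hU) (htail U (hShat U hU) (hdecay U hU)) hφr.le p⟩
  refine ⟨rstar / 8, by positivity, N * (2 * R + 1 / (rstar / 4)) / 2, by positivity, Υ,
    ?_, ?_, ?_⟩
  · rintro u U φ p hU hφ hφr rfl
    have hp := peak_of_rep hrstar (hShat U hU) hφ
      (hlow U hU) (htail U (hShat U hU) (hdecay U hU)) hφr p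
    have := norm_le_coord (Υ (fun x => U (x - p) + φ x) - p) (2 * R + 1 / (rstar / 4))
      (by positivity) (fun i => by
        rw [PiLp.sub_apply, hΥi]
        exact VS_near hδ hB hp i)
    linarith
  · intro u hu y
    constructor
    · obtain ⟨p, U, φ, hU, hφ, hφr, rfl⟩ := hu
      refine ⟨p + y, U, fun x => φ (x - y), hU, good_shift hφ y, ?_, ?_⟩
      · rw [H1_shift]; exact hφr
      · funext x
        beta_reduce
        rw [sub_sub, add_comm y p]
    · obtain ⟨hg, p, hp⟩ := hpk u hu
      ext i
      rw [PiLp.add_apply, hΥi, hΥi, ← VS_shift hδ hp y i]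
      congr 2
      funext q
      rw [GG_shift, LN_shift_ball (GG_memLp hg)]
  · set η : ℝ := 1 / (2 * R + 2 / (rstar / 4)) with hη
    have hη0 : 0 < η := by positivity
    refine ⟨N * (2 / η ^ 2), by positivity, η / 2, by positivity, ?_⟩
    intro u hu v hv huv
    obtain ⟨hgu, p, hp⟩ := hpk u hu
    obtain ⟨hgv, p', hp'⟩ := hpk v hv
    have hε : H1Norm (fun x => u x - v x) = LN (GG u - GG v) Set.univ := by
      rw [H1_eq (good_sub hgu hgv), GG_sub hgu.1 hgv.1]
    have hε0 : 0 ≤ H1Norm (fun x => u x - v x) := Real.sqrt_nonneg _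
    have hmu := GG_memLp hgu
    have hmv := GG_memLp hgv
    have hd : ∀ s, LN (GG u - GG v) s ≤ H1Norm (fun x => u x - v x) := fun s =>
      hε ▸ LN_mono (hmu.sub hmv) (Set.subset_univ s)
    have h1 : ∀ q, LN (GG u) (Metric.ball q R) ≤
        LN (GG v) (Metric.ball q R) + H1Norm (fun x => u x - v x) := fun q => by
      have := LN_add hmv (hmu.sub hmv) (Metric.ball q R)
      rw [add_sub_cancel] at this
      linarith [hd (Metric.ball q R)]
    have h2 : ∀ q, LN (GG v) (Metric.ball q R) ≤
        LN (GG u) (Metric.ball q R) + H1Norm (fun x => u x - v x) := fun q => by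
      have := LN_sub hmv (hmu.sub hmv) (Metric.ball q R)
      rw [add_sub_cancel] at this
      linarith [hd (Metric.ball q R)]
    rw [mul_assoc]
    refine norm_le_coord _ _ (by positivity) fun i => ?_
    rw [PiLp.sub_apply, hΥi, hΥi, abs_le]
    have k1 := VS_lip hδ hB hη hp hp' huv h1 hε0 i
    have k2 := VS_lip hδ hB hη hp' hp huv h2 hε0 i
    constructor <;> linarith
end
end

section
/- Let N ≥ 3 be an integer and p > 1. Let V : ℝ^N → ℝ be measurable and let 0 < V̲ ≤ m0 be constants with V(x) ≥ V̲ for all x ∈ ℝ^N. Let D ⊆ ℝ^N be a measurable set with V(x) ≥ m0 for all x ∈ D. For ε > 0 and admissible u (with in addition x ↦ V(εx)u(x)² integrable) define J_ε(u) = (1/2)∫_{ℝ^N}|∇u|² dx + (1/2)∫_{ℝ^N}V(εx)u² dx − ∫_{ℝ^N}F(u) dx + Q_ε(u), where Q_ε(u) = ( max(0, ε^{−2}∫_{{x : εx ∉ D}} u² dx − 1) )^{(p+1)/2}. Then for every ε with 0 < ε ≤ 1 and ε²(m0 − V̲) ≤ 1, and every such u, one has J_ε(u) ≥ L_{m0}(u)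 − (m0 − V̲)ε². (Lemma 3.4 of the paper, with C₀ = m0 − V̲ and D the enlarged domain Ω_{2h₀} on which V ≥ m0.) -/
open MeasureTheory Real

noncomputable section

/-- The penalization term `Q_ε`. -/
def Qfun {N : ℕ} (ε p : ℝ) (D : Set (EuclideanSpace ℝ (Fin N)))
    (u : EuclideanSpace ℝ (Fin N) → ℝ) : ℝ :=
  (max 0 (ε⁻¹ ^ 2 * (∫ x in {x | ε • x ∉ D}, (u x) ^ 2) - 1)) ^ ((p + 1) / 2)

/-- The penalized functional `J_ε`. -/
def Jfun {N : ℕ} (ε p : ℝ) (V : EuclideanSpace ℝ (Fin N) → ℝ)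
    (D : Set (EuclideanSpace ℝ (Fin N))) (F : ℝ → ℝ)
    (u : EuclideanSpace ℝ (Fin N) → ℝ) : ℝ :=
  (1 / 2) * (∫ x, ‖gradient u x‖ ^ 2) + (1 / 2) * (∫ x, V (ε • x) * (u x) ^ 2) -
    (∫ x, F (u x)) + Qfun ε p D u

/-- Lemma 3.4: `J_ε(u) ≥ L_{m0}(u) - (m0 - V̲)ε²`. -/
theorem Jfun_ge_Lfun_sub (N : ℕ) (hN : 3 ≤ N) (p : ℝ) (hp : 1 < p)
    (V : EuclideanSpace ℝ (Fin N) → ℝ) (hVmeas : Measurable V)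
    (Vlow m0 : ℝ) (hVlow : 0 < Vlow) (hVm0 : Vlow ≤ m0)
    (hV : ∀ x, Vlow ≤ V x)
    (D : Set (EuclideanSpace ℝ (Fin N))) (hD : MeasurableSet D)
    (hVD : ∀ x ∈ D, m0 ≤ V x)
    (F : ℝ → ℝ)
    (ε : ℝ) (hε : 0 < ε) (hε1 : ε ≤ 1) (hεm : ε ^ 2 * (m0 - Vlow) ≤ 1)
    (u : EuclideanSpace ℝ (Fin N) → ℝ) (hu : Admissible F u)
    (hVu : Integrable (fun x => V (ε • x) * (u x) ^ 2)) :
    Lfun m0 F u - (m0 - Vlow) * ε ^ 2 ≤ Jfun ε p V D F u := by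
  obtain ⟨-, -, hu2, -⟩ := hu
  set S : Set (EuclideanSpace ℝ (Fin N)) := {x | ε • x ∉ D} with hS
  have hSm : MeasurableSet S := by
    have h1 : Measurable (fun x : EuclideanSpace ℝ (Fin N) => ε • x) :=
      measurable_const_smul ε
    exact (h1 hD).compl
  set A : ℝ := ∫ x in S, (u x) ^ 2 with hA
  have hA0 : 0 ≤ A := integral_nonneg (fun x => sq_nonneg _)
  have hc : 0 ≤ m0 - Vlow := by linarith
  have key : m0 * (∫ x, (u x) ^ 2) - (m0 - Vlow) * A ≤ ∫ x, V (ε • x) * (u x) ^ 2 := by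
    rw [hA, ← integral_indicator hSm, ← integral_const_mul, ← integral_const_mul,
      ← integral_sub (hu2.const_mul _) ((hu2.indicator hSm).const_mul _)]
    refine integral_mono ((hu2.const_mul _).sub ((hu2.indicator hSm).const_mul _)) hVu ?_
    intro x
    by_cases hx : ε • x ∈ D
    · have hxS : x ∉ S := fun h => h hx
      simp only [Set.indicator_of_notMem hxS]
      nlinarith [mul_le_mul_of_nonneg_right (hVD _ hx) (sq_nonneg (u x))]
    · have hxS : x ∈ S := hx
      simp only [Set.indicator_of_mem hxS]
      nlinarith [mul_le_mul_of_nonneg_right (hV (ε • x)) (sq_nonneg (u x))]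
  have hQ : (m0 - Vlow) * A / 2 - (m0 - Vlow) * ε ^ 2 ≤ Qfun ε p D u := by
    unfold Qfun
    rw [← hS, ← hA]
    set t : ℝ := ε⁻¹ ^ 2 * A - 1 with ht
    have hAt : A = ε ^ 2 * (t + 1) := by
      rw [ht]; field_simp; ring
    rcases le_or_gt t 1 with h | h
    · have h0 : 0 ≤ (max 0 t) ^ ((p + 1) / 2) := Real.rpow_nonneg (le_max_left _ _) _
      have : 0 ≤ (m0 - Vlow) * ε ^ 2 * (1 - t) := 
        mul_nonneg (mul_nonneg hc (sq_nonneg _)) (by linarith)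
      rw [hAt]; nlinarith
    · rw [max_eq_right (by linarith)]
      have h1 : t ≤ t ^ ((p + 1) / 2) :=
        Real.self_le_rpow_of_one_le h.le (by linarith)
      have : ε ^ 2 * (m0 - Vlow) * (t - 1) ≤ 1 * (t - 1) :=
        mul_le_mul_of_nonneg_right hεm (by linarith)
      rw [hAt]; nlinarith
  unfold Lfun Jfun
  linarith
end
end
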